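/- Let n ≥ 1 and n/(n+1) < q ≤ 1, fix ψ as in the context, and let c > 0. There is a constant C = C(n,q,c,ψ) with the following property: whenever B ⊆ ℝⁿ is a ball of radius r, K ⊆ B is a compact set with cap_q(K; 2B) ≥ c·r^{n−q}, u : ℝⁿ → ℝ is smooth with compact support and u vanishes on K, and g is a Hajlasz gradient of u on ℝⁿ, then |u(x)| ≤ C · r · ( M(g^q)(x) )^{1/q} for every x in the closed ball cl(B). -/

import Mathlib

open MeasureTheory Metric Set ENNReal NNReal

noncomputable section

/-- `g` is a Hajlasz gradient of `u` on `U ⊆ ℝⁿ`: `g` is measurable, nonnegative, and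
off a set of measure zero `|u x - u y| ≤ ‖x - y‖ (g x + g y)` for `x, y ∈ U`. -/
def IsHajlaszGradientOn (n : ℕ) (u g : EuclideanSpace ℝ (Fin n) → ℝ)
    (U : Set (EuclideanSpace ℝ (Fin n))) : Prop :=
  Measurable g ∧ (∀ x, 0 ≤ g x) ∧
    ∃ E : Set (EuclideanSpace ℝ (Fin n)), MeasureTheory.volume E = 0 ∧
      ∀ x ∈ U \ E, ∀ y ∈ U \ E, |u x - u y| ≤ ‖x - y‖ * (g x + g y)

/-- The partial derivative `∂_j φ` in the `j`-th coordinate direction. -/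
def pderivIdx (n : ℕ) (j : Fin n) (φ : EuclideanSpace ℝ (Fin n) → ℝ)
    (x : EuclideanSpace ℝ (Fin n)) : ℝ :=
  fderiv ℝ φ x (EuclideanSpace.single j 1)

/-- `sup_{t>0} |(∂_j u) * ψ_t|(x)`, the smooth maximal function of the partial
derivative of a differentiable function `u`, where `ψ_t(z) = t^{-n} ψ(z/t)`. -/
def convMax (n : ℕ) (ψ u : EuclideanSpace ℝ (Fin n) → ℝ) (j : Fin n)
    (x : EuclideanSpace ℝ (Fin n)) : ℝ≥0∞ :=
  ⨆ (t : {s : ℝ // 0 < s}),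
    ENNReal.ofReal |∫ y, pderivIdx n j u y * ((t.1⁻¹) ^ n * ψ (t.1⁻¹ • (x - y)))|

/-- The Hardy–Littlewood maximal function, with values in `[0,∞]`. -/
def hlMax (n : ℕ) (h : EuclideanSpace ℝ (Fin n) → ℝ)
    (x : EuclideanSpace ℝ (Fin n)) : ℝ≥0∞ :=
  ⨆ (r : {s : ℝ // 0 < s}),
    (volume (ball x r.1))⁻¹ * ∫⁻ y in ball x r.1, ENNReal.ofReal |h y|

/-- The Hardy `q`-capacity of `K` relative to `U`:
`cap_q(K;U) = inf { Σ_j ‖sup_{t>0} |(∂_jφ) * ψ_t|‖_{L^q}^q : φ ∈ C_0^∞(U), φ ≥ 1 on K }`. -/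
def hardyCap (n : ℕ) (ψ : EuclideanSpace ℝ (Fin n) → ℝ) (q : ℝ)
    (K U : Set (EuclideanSpace ℝ (Fin n))) : ℝ≥0∞ :=
  sInf {r : ℝ≥0∞ | ∃ φ : EuclideanSpace ℝ (Fin n) → ℝ,
    ContDiff ℝ (⊤ : ℕ∞) φ ∧ HasCompactSupport φ ∧ tsupport φ ⊆ U ∧ (∀ x ∈ K, 1 ≤ φ x) ∧
    r = ∑ j : Fin n, ∫⁻ x, convMax n ψ φ j x ^ q}

/-!
If `u x ≠ 0`, the function `φ = θ · (1 - u / u x)`, with `θ` a cutoff between `B` and `2B`,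
competes in the definition of `cap_q(K; 2B)`. With `b = M(g^q)(x)^{1/q}`, the Hajłasz inequality
extends to `|u y - u x| ≤ |y - x| (g y + b)`, so `φ` has the Hajłasz gradient
`C |u x|⁻¹ (g + b) 1_{2B}`, whose `q`-th power has integral at most `C (b / |u x|)^q r^n`.
Comparing with `cap_q(K; 2B) ≥ c r^{n-q}` gives `|u x| ≤ C r b`.

It remains to bound `‖sup_t |∂_j φ * ψ_t|‖_{L^q}` by the `L^q` norm of a Hajłasz gradient `h` of
`φ`. Put `s = n / (n + 1)`. Integrating by parts moves the derivative to `ψ_t`, so the convolution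
is controlled by `t⁻¹` times the mean oscillation of `φ` around `φ x` on a ball of radius
comparable to `t`. A chain of points along which `h` decreases geometrically turns the Hajłasz
inequality into a Sobolev–Poincaré inequality, and the oscillation is at most `C t M(h^s)(x)^{1/s}`.
Since `q / s > 1`, the maximal theorem in `L^{q/s}` finishes the proof.
-/

open Filter Topology TopologicalSpace Module

section LayerCake

variable {α : Type*} [MeasurableSpace α] {μ : Measure α}

lemma lintegral_rpow_le_lintegral_meas_lt_mul (F : α → ℝ≥0∞) {p : ℝ} (hp : 0 < p) :
    ∫⁻ a, F a ^ p ∂μ ≤ ENNReal.ofReal p *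
      ∫⁻ t in Ioi (0 : ℝ), μ {a | ENNReal.ofReal t < F a} * ENNReal.ofReal (t ^ (p - 1)) := by
  -- The layer cake formula is for measurable functions: apply it to simple functions below `F`.
  rw [lintegral_eq_nnreal]
  refine iSup₂_le fun φ hφ => ?_
  have hlevel : ∀ t : ℝ, 0 ≤ t → {a | t < (φ a : ℝ) ^ p⁻¹} ⊆ {a | ENNReal.ofReal t < F a} := by
    intro t ht a (ha : t < (φ a : ℝ) ^ p⁻¹)
    have hφF : (φ a : ℝ≥0∞) ^ p⁻¹ ≤ F a := (ENNReal.rpow_inv_le_iff hp).2 (hφ a)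
    refine lt_of_lt_of_le ?_ hφF
    rwa [← ENNReal.ofReal_coe_nnreal, ENNReal.ofReal_rpow_of_nonneg (φ a).coe_nonneg
      (inv_nonneg.2 hp.le), ENNReal.ofReal_lt_ofReal_iff_of_nonneg ht]
  calc (φ.map ((↑) : ℝ≥0 → ℝ≥0∞)).lintegral μ
      = ∫⁻ a, ENNReal.ofReal (((φ a : ℝ) ^ p⁻¹) ^ p) ∂μ := by
        rw [← SimpleFunc.lintegral_eq_lintegral]
        refine lintegral_congr fun a => ?_
        rw [Real.rpow_inv_rpow (φ a).coe_nonneg hp.ne', ENNReal.ofReal_coe_nnreal,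
          SimpleFunc.map_apply]
    _ = ENNReal.ofReal p * ∫⁻ t in Ioi (0 : ℝ),
          μ {a | t < (φ a : ℝ) ^ p⁻¹} * ENNReal.ofReal (t ^ (p - 1)) :=
        lintegral_rpow_eq_lintegral_meas_lt_mul μ
          (Eventually.of_forall fun a => Real.rpow_nonneg (φ a).coe_nonneg _)
          ((measurable_coe_nnreal_real.comp φ.measurable).pow_const _).aemeasurable hp
    _ ≤ _ := by
        gcongr ENNReal.ofReal p * ?_
        refine setLIntegral_mono' measurableSet_Ioi fun t ht => ?_
        exact mul_le_mul_left (measure_mono (hlevel t (le_of_lt ht))) _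

lemma setLIntegral_rpow_sub_two_le {p : ℝ} (hp : 1 < p) (a : ℝ≥0∞) :
    ∫⁻ t in Ioi (0 : ℝ) ∩ {t | ENNReal.ofReal (t / 2) < a}, ENNReal.ofReal (t ^ (p - 2)) ≤
      ENNReal.ofReal (2 ^ (p - 1) / (p - 1)) * a ^ (p - 1) := by
  have hp' : 0 < p - 1 := sub_pos.2 hp
  induction a with
  | top =>
    rw [ENNReal.top_rpow_of_pos hp', ENNReal.mul_top (by simpa using by positivity)]
    exact le_top
  | coe a =>
    have hset : Ioi (0 : ℝ) ∩ {t | ENNReal.ofReal (t / 2) < a} = Ioo 0 (2 * (a : ℝ)) := by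
      ext t
      refine and_congr_right fun ht : 0 < t => ?_
      rw [mem_ofPred_eq, ← ENNReal.ofReal_coe_nnreal, ENNReal.ofReal_lt_ofReal_iff_of_nonneg
        (by positivity), div_lt_iff₀ two_pos, mul_comm]
    have hintegral : IntegrableOn (fun t : ℝ => t ^ (p - 2)) (Ioo 0 (2 * (a : ℝ))) :=
      (intervalIntegrable_iff_integrableOn_Ioo_of_le (by positivity)).1
        (intervalIntegral.intervalIntegrable_rpow' (by linarith))
    rw [hset, ← ofReal_integral_eq_lintegral_ofReal hintegral
      ((ae_restrict_mem measurableSet_Ioo).mono fun t ht => Real.rpow_nonneg ht.1.le _),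
      ← integral_Ioc_eq_integral_Ioo, ← intervalIntegral.integral_of_le (by positivity),
      integral_rpow (Or.inl (by linarith)), show p - 2 + 1 = p - 1 by ring,
      Real.zero_rpow hp'.ne', sub_zero, Real.mul_rpow two_pos.le a.coe_nonneg, mul_div_right_comm,
      ENNReal.ofReal_mul (by positivity), ← ENNReal.ofReal_rpow_of_nonneg a.coe_nonneg hp'.le,
      ENNReal.ofReal_coe_nnreal]

lemma lintegral_setLIntegral_lt_mul_rpow_le [SFinite μ] {f : α → ℝ≥0∞} (hf : Measurable f)
    {p : ℝ} (hp : 1 < p) :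
    ∫⁻ t in Ioi (0 : ℝ), (∫⁻ a in {a | ENNReal.ofReal (t / 2) < f a}, f a ∂μ) *
        ENNReal.ofReal (t ^ (p - 2)) ≤
      ENNReal.ofReal (2 ^ (p - 1) / (p - 1)) * ∫⁻ a, f a ^ p ∂μ := by
  set S : Set (ℝ × α) := {z | ENNReal.ofReal (z.1 / 2) < f z.2}
  have hS : MeasurableSet S := measurableSet_lt (by fun_prop) (by fun_prop)
  set k : ℝ → α → ℝ≥0∞ := fun t a =>
    S.indicator (fun z => f z.2 * ENNReal.ofReal (z.1 ^ (p - 2))) (t, a)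
  have hfiber : ∀ t : ℝ, (∫⁻ a in {a | ENNReal.ofReal (t / 2) < f a}, f a ∂μ) *
      ENNReal.ofReal (t ^ (p - 2)) = ∫⁻ a, k t a ∂μ := by
    intro t
    rw [← lintegral_mul_const' _ _ ENNReal.ofReal_ne_top,
      ← lintegral_indicator (measurableSet_lt measurable_const hf)]
    rfl
  have hsection : ∀ a, ∫⁻ t in Ioi (0 : ℝ), k t a ≤
      ENNReal.ofReal (2 ^ (p - 1) / (p - 1)) * f a ^ p := by
    intro a
    have hm : MeasurableSet {t : ℝ | ENNReal.ofReal (t / 2) < f a} :=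
      measurableSet_lt (by fun_prop) measurable_const
    have hk : ∫⁻ t in Ioi (0 : ℝ), k t a =
        f a * ∫⁻ t in Ioi (0 : ℝ) ∩ {t | ENNReal.ofReal (t / 2) < f a},
          ENNReal.ofReal (t ^ (p - 2)) := by
      rw [← lintegral_const_mul _ (by fun_prop), inter_comm, ← Measure.restrict_restrict hm,
        ← lintegral_indicator hm]
      rfl
    have hpow : f a ^ p = f a * f a ^ (p - 1) := by
      simpa using ENNReal.rpow_add_of_nonneg (x := f a) 1 (p - 1) zero_le_one (by linarith)
    rw [hk, hpow, mul_left_comm]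
    gcongr
    exact setLIntegral_rpow_sub_two_le hp _
  calc _ = ∫⁻ t in Ioi (0 : ℝ), ∫⁻ a, k t a ∂μ := by simp_rw [hfiber]
    _ = ∫⁻ a, (∫⁻ t in Ioi (0 : ℝ), k t a) ∂μ :=
        lintegral_lintegral_swap (Measurable.indicator (by fun_prop) hS).aemeasurable
    _ ≤ ∫⁻ a, ENNReal.ofReal (2 ^ (p - 1) / (p - 1)) * f a ^ p ∂μ := lintegral_mono hsection
    _ = _ := lintegral_const_mul' _ _ ENNReal.ofReal_ne_top

lemma lintegral_rpow_le_of_forall_mul_meas_lt_le [SFinite μ] {F f : α → ℝ≥0∞} (hf : Measurable f)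
    {p : ℝ} (hp : 1 < p) {A : ℝ≥0}
    (hF : ∀ t : ℝ, 0 < t → ENNReal.ofReal t * μ {a | ENNReal.ofReal t < F a} ≤
      A * ∫⁻ a in {a | ENNReal.ofReal (t / 2) < f a}, f a ∂μ) :
    ∫⁻ a, F a ^ p ∂μ ≤
      ENNReal.ofReal p * (A * (ENNReal.ofReal (2 ^ (p - 1) / (p - 1)) * ∫⁻ a, f a ^ p ∂μ)) := by
  have hlevel : ∀ t ∈ Ioi (0 : ℝ), μ {a | ENNReal.ofReal t < F a} * ENNReal.ofReal (t ^ (p - 1)) ≤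
      A * ((∫⁻ a in {a | ENNReal.ofReal (t / 2) < f a}, f a ∂μ) *
        ENNReal.ofReal (t ^ (p - 2))) := by
    intro t (ht : 0 < t)
    have hpow : t ^ (p - 1) = t * t ^ (p - 2) := by
      rw [← Real.rpow_one_add' ht.le (by linarith)]
      ring_nf
    rw [hpow, ENNReal.ofReal_mul ht.le, ← mul_assoc, ← mul_assoc, mul_comm (μ _)]
    exact mul_le_mul_left (hF t ht) _
  calc ∫⁻ a, F a ^ p ∂μ
      ≤ ENNReal.ofReal p * ∫⁻ t in Ioi (0 : ℝ),
          μ {a | ENNReal.ofReal t < F a} * ENNReal.ofReal (t ^ (p - 1)) :=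
        lintegral_rpow_le_lintegral_meas_lt_mul F (by linarith)
    _ ≤ ENNReal.ofReal p * ∫⁻ t in Ioi (0 : ℝ),
          A * ((∫⁻ a in {a | ENNReal.ofReal (t / 2) < f a}, f a ∂μ) *
            ENNReal.ofReal (t ^ (p - 2))) := by
        gcongr ENNReal.ofReal p * ?_
        exact setLIntegral_mono' measurableSet_Ioi hlevel
    _ ≤ _ := by
        rw [lintegral_const_mul' _ _ ENNReal.coe_ne_top]
        gcongr
        exact lintegral_setLIntegral_lt_mul_rpow_le hf hp

end LayerCake

section Average

variable {α : Type*} [MeasurableSpace α] {μ : Measure α}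

lemma exists_mem_notMem_null_le_of_setLIntegral_le {s N : Set α} {f : α → ℝ≥0∞} {c : ℝ≥0∞}
    (hs₀ : μ s ≠ 0) (hs : μ s ≠ ∞) (hf : AEMeasurable f (μ.restrict s)) (hN : μ N = 0)
    (h : ∫⁻ a in s, f a ∂μ ≤ c * μ s) : ∃ a ∈ s, a ∉ N ∧ f a ≤ c := by
  have hsN : μ (s \ N) = μ s := measure_sdiff_null hN
  obtain ⟨a, ha, hfa⟩ := exists_le_setLAverage (hsN.trans_ne hs₀) (hsN.trans_ne hs)
    (hf.mono_measure (Measure.restrict_mono_set μ sdiff_subset))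
  refine ⟨a, ha.1, ha.2, hfa.trans ?_⟩
  rw [setLAverage_eq, hsN]
  exact ENNReal.div_le_of_le_mul ((lintegral_mono_set sdiff_subset).trans h)

end Average

section MaximalFunction

/-- The centred Hardy–Littlewood maximal function of `f : X → [0, ∞]` with respect to a measure
on a metric space. The radii range over a subtype, as in `hlMax`. -/
def maximalFunction {X : Type*} [PseudoMetricSpace X] [MeasurableSpace X] (μ : Measure X)
    (f : X → ℝ≥0∞) (x : X) : ℝ≥0∞ :=
  ⨆ ρ : {s : ℝ // 0 < s}, (μ (ball x ρ))⁻¹ * ∫⁻ y in ball x ρ, f y ∂μ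

lemma hlMax_eq_maximalFunction (n : ℕ) (h : EuclideanSpace ℝ (Fin n) → ℝ) :
    hlMax n h = maximalFunction volume fun y => ‖h y‖ₑ := by
  simp only [Real.enorm_eq_ofReal_abs]
  rfl

lemma exists_countable_pairwiseDisjoint_ball_subset_biUnion {X : Type*} [PseudoMetricSpace X]
    [SeparableSpace X] {S : Set X} {ρ : X → ℝ} {R : ℝ} (hρ : ∀ x ∈ S, 0 < ρ x)
    (hR : ∀ x ∈ S, ρ x ≤ R) :
    ∃ T ⊆ S, T.Countable ∧ T.PairwiseDisjoint (fun b => ball b (ρ b)) ∧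
      S ⊆ ⋃ b ∈ T, closedBall b (5 * ρ b) := by
  obtain ⟨T, hTS, hdisj, hcov⟩ :=
    Vitali.exists_disjoint_subfamily_covering_enlargement_closedBall S id ρ R hR 5 (by norm_num)
  refine ⟨T, hTS, ?_, hdisj.mono fun _ => ball_subset_closedBall, fun a ha => ?_⟩
  · exact hdisj.countable_of_nonempty_interior fun x hx =>
      ⟨x, ball_subset_interior_closedBall (mem_ball_self (hρ x (hTS hx)))⟩
  · obtain ⟨b, hb, hab⟩ := hcov a ha
    exact mem_biUnion hb (hab (mem_closedBall_self (hρ a ha).le))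

section MetricSpace

variable {X : Type*} [PseudoMetricSpace X] [MeasurableSpace X] {μ : Measure X} {f : X → ℝ≥0∞}
  {x : X} {c : ℝ≥0∞}

lemma exists_mul_measure_ball_le_of_lt_maximalFunction (h : c < maximalFunction μ f x) :
    ∃ ρ : ℝ, 0 < ρ ∧ c * μ (ball x ρ) ≤ ∫⁻ y in ball x ρ, f y ∂μ := by
  obtain ⟨⟨ρ, hρ⟩, hc⟩ := lt_iSup_iff.1 h
  refine ⟨ρ, hρ, ?_⟩
  rw [mul_comm, ← div_eq_mul_inv] at hc
  exact ENNReal.mul_le_of_le_div hc.le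

lemma maximalFunction_le_indicator_add (c : ℝ≥0∞) (x : X) :
    maximalFunction μ f x ≤ maximalFunction μ ({y | c < f y}.indicator f) x + c := by
  refine iSup_le fun ρ => ?_
  have hsplit : ∀ y, f y ≤ {y | c < f y}.indicator f y + c := by
    intro y
    by_cases hy : c < f y
    · simp [indicator_of_mem (show y ∈ {y | c < f y} from hy)]
    · exact (not_lt.1 hy).trans le_add_self
  calc (μ (ball x ρ))⁻¹ * ∫⁻ y in ball x ρ, f y ∂μ
      ≤ (μ (ball x ρ))⁻¹ * ∫⁻ y in ball x ρ, ({y | c < f y}.indicator f y + c) ∂μ := by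
        gcongr with y
        exact hsplit y
    _ = (μ (ball x ρ))⁻¹ * ∫⁻ y in ball x ρ, {y | c < f y}.indicator f y ∂μ +
          (μ (ball x ρ))⁻¹ * μ (ball x ρ) * c := by
        rw [lintegral_add_right _ measurable_const, setLIntegral_const, mul_add, mul_comm c,
          mul_assoc]
    _ ≤ _ := by
        gcongr
        · exact le_iSup (fun ρ : {s : ℝ // 0 < s} => (μ (ball x ρ))⁻¹ *
            ∫⁻ y in ball x ρ, {y | c < f y}.indicator f y ∂μ) ρ
        · exact mul_le_of_le_one_left' (ENNReal.inv_mul_le_one _)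

variable [ProperSpace X] [IsFiniteMeasureOnCompacts μ] [μ.IsOpenPosMeasure]

lemma setLIntegral_ball_le_of_maximalFunction_le (h : maximalFunction μ f x ≤ c) {ρ : ℝ}
    (hρ : 0 < ρ) : ∫⁻ y in ball x ρ, f y ∂μ ≤ c * μ (ball x ρ) := by
  have hle := (le_iSup (fun ρ : {s : ℝ // 0 < s} => (μ (ball x ρ))⁻¹ *
    ∫⁻ y in ball x ρ, f y ∂μ) ⟨ρ, hρ⟩).trans h
  rwa [mul_comm, ← div_eq_mul_inv, ENNReal.div_le_iff (measure_ball_pos μ x hρ).ne'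
    measure_ball_lt_top.ne] at hle

lemma frequently_notMem_null_le_of_maximalFunction_le (hf : Measurable f) {N : Set X}
    (hN : μ N = 0) (h : maximalFunction μ f x ≤ c) : ∃ᶠ z in 𝓝 x, z ∉ N ∧ f z ≤ c := by
  refine nhds_basis_ball.frequently_iff.2 fun ρ hρ => ?_
  exact exists_mem_notMem_null_le_of_setLIntegral_le (measure_ball_pos μ x hρ).ne'
    measure_ball_lt_top.ne hf.aemeasurable hN (setLIntegral_ball_le_of_maximalFunction_le h hρ)

end MetricSpace

variable {E : Type*} [NormedAddCommGroup E] [NormedSpace ℝ E] [FiniteDimensional ℝ E] [Nontrivial E]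
  [MeasurableSpace E] [BorelSpace E] (μ : Measure E) [μ.IsAddHaarMeasure]

lemma exists_forall_measure_ball_le_imp_radius_le {m : ℝ≥0∞} (hm : m ≠ ∞) :
    ∃ R : ℝ, ∀ (x : E) (ρ : ℝ), μ (ball x ρ) ≤ m → ρ ≤ R := by
  have hV : μ (ball (0 : E) 1) ≠ 0 := (measure_ball_pos μ _ one_pos).ne'
  refine ⟨max 1 (m / μ (ball (0 : E) 1)).toReal, fun x ρ h => ?_⟩
  rcases le_or_gt ρ 1 with hρ | hρ
  · exact hρ.trans (le_max_left _ _)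
  rw [μ.addHaar_ball_of_pos x (one_pos.trans hρ),
    ← ENNReal.le_div_iff_mul_le (Or.inl hV) (Or.inl measure_ball_lt_top.ne),
    ENNReal.ofReal_le_iff_le_toReal (ENNReal.div_ne_top hm hV)] at h
  exact (le_self_pow₀ hρ.le finrank_pos.ne').trans (h.trans (le_max_right _ _))

lemma measure_closedBall_five_mul (x : E) {ρ : ℝ} (hρ : 0 ≤ ρ) :
    μ (closedBall x (5 * ρ)) = 5 ^ finrank ℝ E * μ (ball x ρ) := by
  rw [μ.addHaar_closedBall_mul x (by norm_num) hρ, μ.addHaar_closedBall_eq_addHaar_ball,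
    μ.addHaar_ball_center x]
  norm_num [ENNReal.ofReal_pow]

lemma mul_measure_lt_maximalFunction_le (f : E → ℝ≥0∞) (c : ℝ≥0∞) :
    c * μ {x | c < maximalFunction μ f x} ≤ 5 ^ finrank ℝ E * ∫⁻ y, f y ∂μ := by
  rcases eq_or_ne c 0 with rfl | hc
  · simp
  by_cases hI : ∫⁻ y, f y ∂μ = ∞
  · rw [hI, ENNReal.mul_top (by simp)]
    exact le_top
  set S : Set E := {x | c < maximalFunction μ f x}
  choose! ρ hρ hρf using fun x (hx : x ∈ S) =>
    exists_mul_measure_ball_le_of_lt_maximalFunction hx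
  obtain ⟨R, hR⟩ := exists_forall_measure_ball_le_imp_radius_le μ (ENNReal.div_ne_top hI hc)
  have hρR : ∀ x ∈ S, ρ x ≤ R := fun x hx => hR x _ <| by
    rw [ENNReal.le_div_iff_mul_le (Or.inl hc) (Or.inl (ne_top_of_lt hx)), mul_comm]
    exact (hρf x hx).trans (setLIntegral_le_lintegral _ _)
  obtain ⟨T, hTS, hT, hdisj, hST⟩ := exists_countable_pairwiseDisjoint_ball_subset_biUnion hρ hρR
  have henlarge : ∀ b : T, c * μ (closedBall (b : E) (5 * ρ b)) ≤
      5 ^ finrank ℝ E * ∫⁻ y in ball (b : E) (ρ b), f y ∂μ := by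
    rintro ⟨b, hb⟩
    rw [measure_closedBall_five_mul μ b (hρ b (hTS hb)).le, mul_left_comm]
    exact mul_le_mul_right (hρf b (hTS hb)) _
  calc c * μ S ≤ c * ∑' b : T, μ (closedBall (b : E) (5 * ρ b)) := by
        gcongr
        exact (measure_mono hST).trans (measure_biUnion_le _ hT _)
    _ ≤ ∑' b : T, 5 ^ finrank ℝ E * ∫⁻ y in ball (b : E) (ρ b), f y ∂μ := by
        rw [← ENNReal.tsum_mul_left]
        exact ENNReal.tsum_le_tsum henlarge
    _ = 5 ^ finrank ℝ E * ∫⁻ y in ⋃ b ∈ T, ball b (ρ b), f y ∂μ := by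
        rw [ENNReal.tsum_mul_left, lintegral_biUnion hT (fun _ _ => measurableSet_ball) hdisj]
    _ ≤ _ := by
        gcongr
        exact Measure.restrict_le_self

lemma exists_forall_lintegral_maximalFunction_rpow_le {p : ℝ} (hp : 1 < p) :
    ∃ C : ℝ≥0, ∀ f : E → ℝ≥0∞, Measurable f →
      ∫⁻ x, maximalFunction μ f x ^ p ∂μ ≤ C * ∫⁻ x, f x ^ p ∂μ := by
  refine ⟨p.toNNReal * (2 * 5 ^ finrank ℝ E * (2 ^ (p - 1) / (p - 1)).toNNReal), fun f hf => ?_⟩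
  have hweak : ∀ t : ℝ, 0 < t →
      ENNReal.ofReal t * μ {x | ENNReal.ofReal t < maximalFunction μ f x} ≤
        (2 * 5 ^ finrank ℝ E : ℝ≥0) * ∫⁻ x in {x | ENNReal.ofReal (t / 2) < f x}, f x ∂μ := by
    intro t ht
    set g : E → ℝ≥0∞ := {x | ENNReal.ofReal (t / 2) < f x}.indicator f
    have hhalf : ENNReal.ofReal t = ENNReal.ofReal (t / 2) + ENNReal.ofReal (t / 2) := by
      rw [← ENNReal.ofReal_add (by positivity) (by positivity), add_halves]
    have hsub : {x | ENNReal.ofReal t < maximalFunction μ f x} ⊆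
        {x | ENNReal.ofReal (t / 2) < maximalFunction μ g x} := fun x hx => by
      have hx' := hx.trans_le (maximalFunction_le_indicator_add (ENNReal.ofReal (t / 2)) x)
      rw [hhalf] at hx'
      exact lt_of_add_lt_add_right hx'
    calc _ ≤ ENNReal.ofReal t * μ {x | ENNReal.ofReal (t / 2) < maximalFunction μ g x} := by
          gcongr
      _ = 2 * (ENNReal.ofReal (t / 2) *
            μ {x | ENNReal.ofReal (t / 2) < maximalFunction μ g x}) := by
          rw [hhalf]
          ring
      _ ≤ 2 * (5 ^ finrank ℝ E * ∫⁻ x, g x ∂μ) := by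
          gcongr 2 * ?_
          exact mul_measure_lt_maximalFunction_le μ g _
      _ = _ := by
          rw [lintegral_indicator (measurableSet_lt measurable_const hf)]
          push_cast
          ring
  refine (lintegral_rpow_le_of_forall_mul_meas_lt_le hf hp hweak).trans_eq ?_
  push_cast [ENNReal.ofReal]
  ring

end MaximalFunction

section HajlaszInequality

/-- The Hajłasz inequality for the pair `u`, `g` outside the exceptional set `N`. This is the
pointwise part of `IsHajlaszGradientOn`; that `g` is measurable and nonnegative and `N` is null is
not included. -/
def HajlaszBoundOff {X : Type*} [PseudoMetricSpace X] (N : Set X) (u g : X → ℝ) : Prop :=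
  ∀ ⦃x⦄, x ∉ N → ∀ ⦃y⦄, y ∉ N → |u x - u y| ≤ dist x y * (g x + g y)

namespace HajlaszBoundOff

variable {X : Type*} [PseudoMetricSpace X] {N : Set X} {u g : X → ℝ}

lemma abs_sub_le_of_frequently (h : HajlaszBoundOff N u g) {x y : X} {b : ℝ}
    (hu : ContinuousAt u x) (hx : ∃ᶠ z in 𝓝 x, z ∉ N ∧ g z ≤ b) (hy : y ∉ N) :
    |u y - u x| ≤ dist y x * (g y + b) := by
  have hlim : Tendsto (fun z => dist y z * (g y + b) - |u y - u z|) (𝓝 x)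
      (𝓝 (dist y x * (g y + b) - |u y - u x|)) :=
    ((tendsto_const_nhds.dist tendsto_id).mul_const _).sub (hu.tendsto.const_sub (u y)).abs
  refine sub_nonneg.1 (ge_of_tendsto_of_frequently hlim (hx.mono fun z ⟨hzN, hzb⟩ => ?_))
  refine sub_nonneg.2 ((h hy hzN).trans ?_)
  gcongr

lemma const_mul (h : HajlaszBoundOff N u g) (c : ℝ) :
    HajlaszBoundOff N (fun y => c * u y) (fun y => |c| * g y) := by
  intro x hx y hy
  rw [← mul_sub, abs_mul, ← mul_add, mul_left_comm]
  gcongr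
  exact h hx hy

lemma cutoff_mul_sub_const (h : HajlaszBoundOff N u g) (hg : ∀ y, 0 ≤ g y) {θ : X → ℝ} {S : Set X}
    {L : ℝ≥0} {a D G : ℝ} (hD : 0 ≤ D) (hG : 0 ≤ G) (hθL : LipschitzWith L θ)
    (hθ1 : ∀ y, |θ y| ≤ 1) (hθS : ∀ y ∉ S, θ y = 0)
    (hu : ∀ y ∈ S, y ∉ N → |u y - a| ≤ D * (g y + G)) :
    HajlaszBoundOff N (fun y => θ y * (u y - a))
      (S.indicator fun y => (1 + L * D) * (g y + G)) := by
  set k : X → ℝ := S.indicator fun y => (1 + L * D) * (g y + G)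
  have hkS : ∀ y ∈ S, k y = (1 + L * D) * (g y + G) := fun y hy => indicator_of_mem hy _
  have hk0 : ∀ y, 0 ≤ k y := indicator_nonneg fun y _ => by have := hg y; positivity
  have hmem : ∀ y ∈ S, y ∉ N → ∀ z ∉ N,
      |θ y * (u y - a) - θ z * (u z - a)| ≤ dist y z * (k y + k z) := by
    intro y hyS hyN z hzN
    have hθ : |θ y - θ z| * |u y - a| ≤ (L * dist y z) * (D * (g y + G)) := by
      gcongr
      · exact hθL.dist_le_mul y z
      · exact hu y hyS hyN
    have hincr : |θ z| * |u y - u z| ≤ dist y z * (g y + k z) := by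
      by_cases hzS : z ∈ S
      · have hgk : g z ≤ k z := by
          rw [hkS z hzS]
          nlinarith [mul_nonneg (mul_nonneg L.coe_nonneg hD) (add_nonneg (hg z) hG)]
        refine (mul_le_of_le_one_left (abs_nonneg _) (hθ1 z)).trans ((h hyN hzN).trans ?_)
        gcongr
      · rw [hθS z hzS, abs_zero, zero_mul]
        exact mul_nonneg dist_nonneg (add_nonneg (hg y) (hk0 z))
    calc |θ y * (u y - a) - θ z * (u z - a)|
        = |(θ y - θ z) * (u y - a) + θ z * (u y - u z)| := by ring_nf
      _ ≤ (L * dist y z) * (D * (g y + G)) + dist y z * (g y + k z) := by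
          refine (abs_add_le _ _).trans ?_
          rw [abs_mul, abs_mul]
          exact add_le_add hθ hincr
      _ ≤ dist y z * (k y + k z) := by
          rw [hkS y hyS]
          nlinarith [mul_nonneg (dist_nonneg : 0 ≤ dist y z) hG]
  intro y hy z hz
  by_cases hyS : y ∈ S
  · exact hmem y hyS hy z hz
  by_cases hzS : z ∈ S
  · rw [abs_sub_comm, dist_comm, add_comm]
    exact hmem z hzS hz y hy
  · simp [hθS y hyS, hθS z hzS, k, hyS, hzS]

end HajlaszBoundOff

end HajlaszInequality

section PointwiseEstimate

variable {E : Type*} [NormedAddCommGroup E] [NormedSpace ℝ E] [FiniteDimensional ℝ E] [Nontrivial E]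
  [MeasurableSpace E] [BorelSpace E] {μ : Measure E} [μ.IsAddHaarMeasure]
  {N : Set E} {u w : E → ℝ} {x : E} {b : ℝ}

lemma exists_mem_ball_notMem_null_le_of_maximalFunction_le (hw : Measurable w) (hN : μ N = 0)
    (hb : 0 < b) (hM : maximalFunction μ (fun y => ‖w y ^ finrank ℝ E‖ₑ) x ≤
      ENNReal.ofReal (b ^ finrank ℝ E)) (y : E) {ρ : ℝ} (hρ : 0 < ρ) :
    ∃ z ∈ ball y ρ, z ∉ N ∧ w z ≤ b * ((dist y x + ρ) / ρ) := by
  have hsub : ball y ρ ⊆ ball x (dist y x + ρ) := ball_subset_ball' (add_comm _ _).le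
  have hd : 0 < dist y x + ρ := by positivity
  have hintegral : ∫⁻ z in ball y ρ, ‖w z ^ finrank ℝ E‖ₑ ∂μ ≤
      ENNReal.ofReal ((b * ((dist y x + ρ) / ρ)) ^ finrank ℝ E) * μ (ball y ρ) := by
    calc _ ≤ ∫⁻ z in ball x (dist y x + ρ), ‖w z ^ finrank ℝ E‖ₑ ∂μ := lintegral_mono_set hsub
      _ ≤ ENNReal.ofReal (b ^ finrank ℝ E) * μ (ball x (dist y x + ρ)) :=
          setLIntegral_ball_le_of_maximalFunction_le hM hd
      _ = _ := by
          rw [μ.addHaar_ball_of_pos x hd, μ.addHaar_ball_of_pos y hρ, ← mul_assoc, ← mul_assoc,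
            ← ENNReal.ofReal_mul (by positivity), ← ENNReal.ofReal_mul (by positivity), ← mul_pow,
            ← mul_pow, mul_assoc b, div_mul_cancel₀ _ hρ.ne']
  obtain ⟨z, hz, hzN, hwz⟩ := exists_mem_notMem_null_le_of_setLIntegral_le
    (measure_ball_pos μ y hρ).ne' measure_ball_lt_top.ne (by fun_prop) hN hintegral
  refine ⟨z, hz, hzN, ?_⟩
  rw [Real.enorm_eq_ofReal_abs, ENNReal.ofReal_le_ofReal_iff (by positivity), abs_pow] at hwz
  exact (le_abs_self _).trans
    ((pow_le_pow_iff_left₀ (abs_nonneg _) (by positivity) finrank_pos.ne').1 hwz)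

lemma abs_sub_le_dist_mul_pow_add_pow (hu : Continuous u) (hw : Measurable w) (hw0 : ∀ y, 0 ≤ w y)
    (hN : μ N = 0) (hH : HajlaszBoundOff N u fun y => w y ^ (finrank ℝ E + 1)) (hb : 0 < b)
    (hM : maximalFunction μ (fun y => ‖w y ^ finrank ℝ E‖ₑ) x ≤ ENNReal.ofReal (b ^ finrank ℝ E))
    {y : E} (hy : y ∉ N) :
    |u y - u x| ≤ dist y x * (w y ^ (finrank ℝ E + 1) + b ^ (finrank ℝ E + 1)) := by
  refine hH.abs_sub_le_of_frequently hu.continuousAt ?_ hy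
  refine nhds_basis_ball.frequently_iff.2 fun ρ hρ => ?_
  obtain ⟨z, hz, hzN, hwz⟩ := exists_mem_ball_notMem_null_le_of_maximalFunction_le hw hN hb hM x hρ
  rw [dist_self, zero_add, div_self hρ.ne', mul_one] at hwz
  exact ⟨z, hz, hzN, pow_le_pow_left₀ (hw0 z) hwz _⟩

lemma exists_notMem_le_half_abs_sub_le (hw : Measurable w) (hw0 : ∀ y, 0 ≤ w y)
    (hN : μ N = 0) (hH : HajlaszBoundOff N u fun y => w y ^ (finrank ℝ E + 1)) (hb : 0 < b)
    (hM : maximalFunction μ (fun y => ‖w y ^ finrank ℝ E‖ₑ) x ≤ ENNReal.ofReal (b ^ finrank ℝ E))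
    {y : E} (hy : y ∉ N) (hyx : y ≠ x) (hwy : 8 * b < w y) :
    ∃ z ∉ N, w z ≤ w y / 2 ∧ dist z x ≤ 3 / 2 * dist y x ∧
      |u y - u z| ≤ 8 * b * dist y x * w y ^ finrank ℝ E := by
  have hd : 0 < dist y x := dist_pos.2 hyx
  have hw' : 0 < w y := by linarith
  -- At this radius the bound of the maximal function at `x` yields `w z ≤ w y / 4 + b` near `y`.
  set ρ : ℝ := dist y x * (4 * b / w y) with hρ
  have hρ0 : 0 < ρ := by positivity
  have hρd : ρ ≤ dist y x / 2 := by
    rw [hρ, mul_div_assoc', div_le_div_iff₀ hw' two_pos]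
    nlinarith
  obtain ⟨z, hz, hzN, hwz⟩ := exists_mem_ball_notMem_null_le_of_maximalFunction_le hw hN hb hM y hρ0
  have hratio : b * ((dist y x + ρ) / ρ) = w y / 4 + b := by
    rw [hρ]
    field_simp
  have hhalf : w z ≤ w y / 2 := by linarith
  have hzy : dist z y < ρ := hz
  refine ⟨z, hzN, hhalf, by linarith [dist_triangle z y x], ?_⟩
  calc |u y - u z| ≤ dist y z * (w y ^ (finrank ℝ E + 1) + w z ^ (finrank ℝ E + 1)) := hH hy hzN
    _ ≤ ρ * (w y ^ (finrank ℝ E + 1) + w y ^ (finrank ℝ E + 1)) := by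
        have := hw0 z
        rw [dist_comm]
        gcongr
        linarith
    _ = 8 * b * dist y x * w y ^ finrank ℝ E := by
        rw [hρ]
        field_simp
        ring

lemma abs_sub_le_mul_dist_mul_max_pow_of_le (hu : Continuous u) (hw : Measurable w)
    (hw0 : ∀ y, 0 ≤ w y) (hN : μ N = 0)
    (hH : HajlaszBoundOff N u fun y => w y ^ (finrank ℝ E + 1)) (hb : 0 < b)
    (hM : maximalFunction μ (fun y => ‖w y ^ finrank ℝ E‖ₑ) x ≤ ENNReal.ofReal (b ^ finrank ℝ E))
    {y : E} (hy : y ∉ N) (hwy : w y ≤ 8 * b) :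
    |u y - u x| ≤ 32 * b * dist y x * max (w y) b ^ finrank ℝ E := by
  set m := max (w y) b
  calc |u y - u x| ≤ dist y x * (w y ^ finrank ℝ E * w y + b ^ finrank ℝ E * b) := by
        simpa only [pow_succ] using abs_sub_le_dist_mul_pow_add_pow hu hw hw0 hN hH hb hM hy
    _ ≤ dist y x * (m ^ finrank ℝ E * (8 * b) + m ^ finrank ℝ E * b) := by
        have := hw0 y
        gcongr
        exacts [le_max_left _ _, le_max_right _ _]
    _ = 9 * (b * dist y x * m ^ finrank ℝ E) := by ring
    _ ≤ 32 * (b * dist y x * m ^ finrank ℝ E) := by gcongr; norm_num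
    _ = _ := by ring

lemma abs_sub_le_mul_dist_mul_max_pow (hu : Continuous u) (hw : Measurable w) (hw0 : ∀ y, 0 ≤ w y)
    (hN : μ N = 0) (hH : HajlaszBoundOff N u fun y => w y ^ (finrank ℝ E + 1)) (hb : 0 < b)
    (hM : maximalFunction μ (fun y => ‖w y ^ finrank ℝ E‖ₑ) x ≤ ENNReal.ofReal (b ^ finrank ℝ E))
    {y : E} (hy : y ∉ N) :
    |u y - u x| ≤ 32 * b * dist y x * max (w y) b ^ finrank ℝ E := by
  have hsmall := fun y hy => abs_sub_le_mul_dist_mul_max_pow_of_le hu hw hw0 hN hH hb hM (y := y) hy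
  have hdyadic : ∀ (k : ℕ), ∀ y ∉ N, w y ≤ 8 * b * 2 ^ k →
      |u y - u x| ≤ 32 * b * dist y x * max (w y) b ^ finrank ℝ E := by
    intro k
    induction k with
    | zero => exact fun y hy hwy => hsmall y hy (by simpa using hwy)
    | succ k ih =>
      intro y hy hwy
      rcases le_or_gt (w y) (8 * b) with hwy8 | hwy8
      · exact hsmall y hy hwy8
      rcases eq_or_ne y x with rfl | hyx
      · simp
      obtain ⟨z, hzN, hhalf, hzx, hyz⟩ :=
        exists_notMem_le_half_abs_sub_le hw hw0 hN hH hb hM hy hyx hwy8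
      have hmax : max (w z) b ^ finrank ℝ E ≤ w y ^ finrank ℝ E / 2 := by
        calc max (w z) b ^ finrank ℝ E ≤ (w y / 2) ^ finrank ℝ E := by
              gcongr
              exact max_le hhalf (by linarith)
          _ ≤ w y ^ finrank ℝ E / 2 := by
              have := hw0 y
              rw [div_pow]
              gcongr
              exact le_self_pow₀ one_le_two finrank_pos.ne'
      rw [max_eq_left (by linarith : b ≤ w y)]
      calc |u y - u x| ≤ |u y - u z| + |u z - u x| := abs_sub_le _ _ _
        _ ≤ 8 * b * dist y x * w y ^ finrank ℝ E +
              32 * b * (3 / 2 * dist y x) * (w y ^ finrank ℝ E / 2) := by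
            gcongr
            refine (ih z hzN (by rw [pow_succ] at hwy; linarith)).trans ?_
            gcongr
        _ = _ := by ring
  obtain ⟨k, hk⟩ := pow_unbounded_of_one_lt (w y / (8 * b)) one_lt_two
  exact hdyadic k y hy ((div_le_iff₀' (by positivity)).1 hk.le)

lemma setLIntegral_ball_enorm_sub_le (hu : Continuous u) (hw : Measurable w) (hw0 : ∀ y, 0 ≤ w y)
    (hN : μ N = 0) (hH : HajlaszBoundOff N u fun y => w y ^ (finrank ℝ E + 1)) (hb : 0 < b)
    (hM : maximalFunction μ (fun y => ‖w y ^ finrank ℝ E‖ₑ) x ≤ ENNReal.ofReal (b ^ finrank ℝ E))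
    {t : ℝ} (ht : 0 < t) :
    ∫⁻ y in ball x t, ‖u y - u x‖ₑ ∂μ ≤
      ENNReal.ofReal (64 * t * b ^ (finrank ℝ E + 1)) * μ (ball x t) := by
  have hpt : ∀ y ∉ N, y ∈ ball x t → ‖u y - u x‖ₑ ≤ ENNReal.ofReal (32 * b * t) *
      (‖w y ^ finrank ℝ E‖ₑ + ENNReal.ofReal (b ^ finrank ℝ E)) := by
    intro y hy hyt
    have hwy := pow_nonneg (hw0 y) (finrank ℝ E)
    rw [Real.enorm_eq_ofReal_abs, Real.enorm_of_nonneg hwy,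
      ← ENNReal.ofReal_add hwy (by positivity), ← ENNReal.ofReal_mul (by positivity)]
    refine ENNReal.ofReal_le_ofReal
      ((abs_sub_le_mul_dist_mul_max_pow hu hw hw0 hN hH hb hM hy).trans ?_)
    gcongr
    · exact hyt.le
    · rcases max_choice (w y) b with h | h <;> rw [h]
      · exact le_add_of_nonneg_right (by positivity)
      · exact le_add_of_nonneg_left hwy
  calc _ ≤ ∫⁻ y in ball x t, ENNReal.ofReal (32 * b * t) *
          (‖w y ^ finrank ℝ E‖ₑ + ENNReal.ofReal (b ^ finrank ℝ E)) ∂μ :=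
        setLIntegral_mono_ae' measurableSet_ball
          ((measure_eq_zero_iff_ae_notMem.1 hN).mono hpt)
    _ = ENNReal.ofReal (32 * b * t) * ((∫⁻ y in ball x t, ‖w y ^ finrank ℝ E‖ₑ ∂μ) +
          ENNReal.ofReal (b ^ finrank ℝ E) * μ (ball x t)) := by
        rw [lintegral_const_mul' _ _ ENNReal.ofReal_ne_top, lintegral_add_right _ measurable_const,
          setLIntegral_const]
    _ ≤ ENNReal.ofReal (32 * b * t) * (ENNReal.ofReal (b ^ finrank ℝ E) * μ (ball x t) +
          ENNReal.ofReal (b ^ finrank ℝ E) * μ (ball x t)) := by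
        gcongr
        exact setLIntegral_ball_le_of_maximalFunction_le hM ht
    _ = _ := by
        rw [← two_mul, ← mul_assoc, ← mul_assoc, ← ENNReal.ofReal_ofNat,
          ← ENNReal.ofReal_mul (by positivity), ← ENNReal.ofReal_mul (by positivity)]
        ring_nf

end PointwiseEstimate

section Convolution

variable {E : Type*} [NormedAddCommGroup E] [NormedSpace ℝ E]

/-- The kernel `y ↦ ψ_t(x - y)` with `ψ_t(z) = t⁻ⁿ ψ(z / t)`, `n` the dimension of `E`: integrating
against it is convolving with `ψ_t` and evaluating at `x`. -/
def dilatedKernel (ψ : E → ℝ) (t : ℝ) (x y : E) : ℝ :=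
  t⁻¹ ^ finrank ℝ E * ψ (t⁻¹ • (x - y))

variable {ψ : E → ℝ}

lemma contDiff_dilatedKernel {k : WithTop ℕ∞} (hψ : ContDiff ℝ k ψ) (t : ℝ) (x : E) :
    ContDiff ℝ k (dilatedKernel ψ t x) :=
  contDiff_const.mul (hψ.comp (by fun_prop))

lemma lipschitzWith_dilatedKernel {L : ℝ≥0} (hψ : LipschitzWith L ψ) {t : ℝ} (ht : 0 < t) (x : E) :
    LipschitzWith (t⁻¹ ^ (finrank ℝ E + 1) * L).toNNReal (dilatedKernel ψ t x) := by
  refine LipschitzWith.of_dist_le_mul fun y z => ?_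
  have hψyz := hψ.dist_le_mul (t⁻¹ • (x - y)) (t⁻¹ • (x - z))
  rw [dist_smul₀, dist_sub_left, Real.norm_of_nonneg (by positivity), Real.dist_eq] at hψyz
  rw [Real.coe_toNNReal _ (by positivity), Real.dist_eq, dilatedKernel, dilatedKernel, ← mul_sub,
    abs_mul, abs_of_nonneg (by positivity), pow_succ]
  calc _ ≤ t⁻¹ ^ finrank ℝ E * (L * (t⁻¹ * dist y z)) := by gcongr
    _ = _ := by ring

lemma tsupport_dilatedKernel_subset {R : ℝ} (hψ : tsupport ψ ⊆ ball 0 R) {t : ℝ} (ht : 0 < t)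
    (x : E) : tsupport (dilatedKernel ψ t x) ⊆ ball x (R * t) := by
  intro y hy
  have hy' : t⁻¹ • (x - y) ∈ ball (0 : E) R :=
    hψ (tsupport_comp_subset_preimage ψ (by fun_prop : Continuous fun y => t⁻¹ • (x - y))
      (tsupport_mul_subset_right hy))
  rw [mem_ball_zero_iff, norm_smul, Real.norm_of_nonneg (by positivity),
    inv_mul_lt_iff₀' ht, ← dist_eq_norm, dist_comm] at hy'
  exact hy'

variable [FiniteDimensional ℝ E] [MeasurableSpace E] [BorelSpace E] (μ : Measure E)
  [μ.IsAddHaarMeasure]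

lemma integral_fderiv_mul_eq_neg_integral_sub_const_mul {f Ψ : E → ℝ} (hf : ContDiff ℝ 1 f)
    (hΨ : ContDiff ℝ 1 Ψ) (hΨc : HasCompactSupport Ψ) (a : ℝ) (e : E) :
    ∫ y, fderiv ℝ f y e * Ψ y ∂μ = -∫ y, (f y - a) * fderiv ℝ Ψ y e ∂μ := by
  have hfc : Continuous fun y => f y - a := hf.continuous.sub continuous_const
  have hf' : Continuous fun y => fderiv ℝ f y e :=
    (hf.continuous_fderiv one_ne_zero).clm_apply continuous_const
  have hΨ' : Continuous fun y => fderiv ℝ Ψ y e :=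
    (hΨ.continuous_fderiv one_ne_zero).clm_apply continuous_const
  have hfd : ∀ y, fderiv ℝ (fun y => f y - a) y = fderiv ℝ f y := fun y => fderiv_sub_const a
  rw [integral_mul_fderiv_eq_neg_fderiv_mul_of_integrable, neg_neg]
  · simp only [hfd]
  · simp only [hfd]
    exact (hf'.mul hΨ.continuous).integrable_of_hasCompactSupport hΨc.mul_left
  · exact (hfc.mul hΨ').integrable_of_hasCompactSupport (hΨc.fderiv_apply (𝕜 := ℝ) e).mul_left
  · exact (hfc.mul hΨ.continuous).integrable_of_hasCompactSupport hΨc.mul_left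
  · exact fun y _ => (hf.differentiable one_ne_zero y).sub_const a
  · exact fun y _ => hΨ.differentiable one_ne_zero y

lemma enorm_integral_fderiv_mul_le {f Ψ : E → ℝ} (hf : ContDiff ℝ 1 f) (hΨ : ContDiff ℝ 1 Ψ)
    (hΨc : HasCompactSupport Ψ) {L : ℝ≥0} (hL : LipschitzWith L Ψ) {S : Set E}
    (hS : tsupport Ψ ⊆ S) (a : ℝ) (e : E) :
    ‖∫ y, fderiv ℝ f y e * Ψ y ∂μ‖ₑ ≤ L * ‖e‖ₑ * ∫⁻ y in S, ‖f y - a‖ₑ ∂μ := by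
  have hbound : ∀ y, ‖(f y - a) * fderiv ℝ Ψ y e‖ₑ ≤
      S.indicator (fun y => L * ‖e‖ₑ * ‖f y - a‖ₑ) y := by
    intro y
    by_cases hy : y ∈ S
    · rw [indicator_of_mem hy, enorm_mul, mul_comm]
      gcongr
      refine ((fderiv ℝ Ψ y).le_opENorm e).trans ?_
      gcongr
      exact enorm_le_coe.2 (norm_fderiv_le_of_lipschitz ℝ hL)
    · rw [indicator_of_notMem hy, fderiv_of_notMem_tsupport ℝ (fun h => hy (hS h))]
      simp
  calc ‖∫ y, fderiv ℝ f y e * Ψ y ∂μ‖ₑ = ‖∫ y, (f y - a) * fderiv ℝ Ψ y e ∂μ‖ₑ := by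
        rw [integral_fderiv_mul_eq_neg_integral_sub_const_mul μ hf hΨ hΨc a, enorm_neg]
    _ ≤ ∫⁻ y, ‖(f y - a) * fderiv ℝ Ψ y e‖ₑ ∂μ := enorm_integral_le_lintegral_enorm _
    _ ≤ ∫⁻ y, S.indicator (fun y => L * ‖e‖ₑ * ‖f y - a‖ₑ) y ∂μ := lintegral_mono hbound
    _ ≤ ∫⁻ y in S, L * ‖e‖ₑ * ‖f y - a‖ₑ ∂μ := lintegral_indicator_le _ _
    _ = _ := lintegral_const_mul' _ _ (by finiteness)

lemma exists_forall_enorm_integral_fderiv_mul_dilatedKernel_le [Nontrivial E]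
    (hψ : ContDiff ℝ 1 ψ) (hψc : HasCompactSupport ψ) :
    ∃ C : ℝ≥0, ∀ (u w : E → ℝ) (N : Set E) (x : E) (b : ℝ), ContDiff ℝ 1 u → Measurable w →
      (∀ y, 0 ≤ w y) → μ N = 0 → HajlaszBoundOff N u (fun y => w y ^ (finrank ℝ E + 1)) → 0 < b →
      maximalFunction μ (fun y => ‖w y ^ finrank ℝ E‖ₑ) x ≤ ENNReal.ofReal (b ^ finrank ℝ E) →
      ∀ t : ℝ, 0 < t → ∀ e : E, ‖∫ y, fderiv ℝ u y e * dilatedKernel ψ t x y ∂μ‖ₑ ≤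
        C * ‖e‖ₑ * ENNReal.ofReal (b ^ (finrank ℝ E + 1)) := by
  obtain ⟨L, hL⟩ := ContDiff.lipschitzWith_of_hasCompactSupport hψc hψ one_ne_zero
  obtain ⟨R, hR, hψR⟩ := hψc.isBounded.subset_ball_lt 0 0
  set V : ℝ := μ.real (ball 0 1)
  refine ⟨(64 * L * R ^ (finrank ℝ E + 1) * V).toNNReal, ?_⟩
  intro u w N x b hu hw hw0 hN hH hb hM t ht e
  have hRt : 0 < R * t := by positivity
  have hsupp := tsupport_dilatedKernel_subset hψR ht x
  have hcompact : HasCompactSupport (dilatedKernel ψ t x) :=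
    .of_support_subset_isCompact (isCompact_closedBall x (R * t))
      ((subset_tsupport _).trans (hsupp.trans ball_subset_closedBall))
  have hvol : μ (ball x (R * t)) = ENNReal.ofReal ((R * t) ^ finrank ℝ E * V) := by
    rw [μ.addHaar_ball_of_pos x hRt, ENNReal.ofReal_mul (by positivity), ofReal_measureReal]
  calc _ ≤ (t⁻¹ ^ (finrank ℝ E + 1) * L).toNNReal * ‖e‖ₑ *
          ∫⁻ y in ball x (R * t), ‖u y - u x‖ₑ ∂μ :=
        enorm_integral_fderiv_mul_le μ hu (contDiff_dilatedKernel hψ t x) hcompact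
          (lipschitzWith_dilatedKernel hL ht x) hsupp _ _
    _ ≤ (t⁻¹ ^ (finrank ℝ E + 1) * L).toNNReal * ‖e‖ₑ *
          (ENNReal.ofReal (64 * (R * t) * b ^ (finrank ℝ E + 1)) * μ (ball x (R * t))) := by
        gcongr
        exact setLIntegral_ball_enorm_sub_le hu.continuous hw hw0 hN hH hb hM hRt
    _ = _ := by
        rw [hvol, mul_right_comm, mul_right_comm _ ‖e‖ₑ]
        congr 1
        change ENNReal.ofReal _ * _ = ENNReal.ofReal _ * _
        rw [← ENNReal.ofReal_mul (by positivity), ← ENNReal.ofReal_mul (by positivity),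
          ← ENNReal.ofReal_mul (by positivity)]
        congr 1
        simp only [mul_pow, inv_pow]
        field_simp
        ring

end Convolution

section HardyMaximalFunction

variable {n : ℕ} {ψ : EuclideanSpace ℝ (Fin n) → ℝ}

lemma convMax_eq_iSup_enorm (u : EuclideanSpace ℝ (Fin n) → ℝ) (j : Fin n)
    (x : EuclideanSpace ℝ (Fin n)) :
    convMax n ψ u j x = ⨆ t : {s : ℝ // 0 < s},
      ‖∫ y, fderiv ℝ u y (EuclideanSpace.single j 1) * dilatedKernel ψ t x y‖ₑ := by
  simp only [convMax, pderivIdx, dilatedKernel, Real.enorm_eq_ofReal_abs,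
    finrank_euclideanSpace_fin]

lemma exists_forall_convMax_le_of_maximalFunction_le (hn : n ≠ 0) (hψ : ContDiff ℝ 1 ψ)
    (hψc : HasCompactSupport ψ) :
    ∃ C : ℝ≥0, ∀ (u h : EuclideanSpace ℝ (Fin n) → ℝ) (N : Set (EuclideanSpace ℝ (Fin n)))
      (x : EuclideanSpace ℝ (Fin n)) (b : ℝ≥0), ContDiff ℝ 1 u → Measurable h → (∀ y, 0 ≤ h y) →
      volume N = 0 → HajlaszBoundOff N u h → 0 < b →
      maximalFunction volume (fun y => ‖h y‖ₑ ^ ((n : ℝ) / (n + 1))) x ≤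
        (b : ℝ≥0∞) ^ ((n : ℝ) / (n + 1)) →
      ∀ j, convMax n ψ u j x ≤ C * b := by
  have : Nonempty (Fin n) := ⟨⟨0, Nat.pos_of_ne_zero hn⟩⟩
  have hroot : ∀ a : ℝ, 0 ≤ a →
      ‖(a ^ ((n + 1 : ℕ) : ℝ)⁻¹) ^ n‖ₑ = ‖a‖ₑ ^ ((n : ℝ) / (n + 1)) := by
    intro a ha
    rw [← Real.rpow_mul_natCast ha, inv_mul_eq_div, Nat.cast_succ,
      Real.enorm_rpow_of_nonneg ha (by positivity)]
  obtain ⟨C, hC⟩ := exists_forall_enorm_integral_fderiv_mul_dilatedKernel_le volume hψ hψc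
  simp only [finrank_euclideanSpace_fin] at hC
  refine ⟨C, fun u h N x b hu hh hh0 hN hH hb hM j => ?_⟩
  rw [convMax_eq_iSup_enorm]
  refine iSup_le fun t => ?_
  have hb' : 0 < (b : ℝ) := hb
  have hM' : maximalFunction volume (fun y => ‖(h y ^ ((n + 1 : ℕ) : ℝ)⁻¹) ^ n‖ₑ) x ≤
      ENNReal.ofReal (((b : ℝ) ^ ((n + 1 : ℕ) : ℝ)⁻¹) ^ n) := by
    rw [← Real.enorm_of_nonneg (by positivity), hroot _ hb'.le]
    simpa only [hroot _ (hh0 _), Real.enorm_of_nonneg hb'.le,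
      ENNReal.ofReal_coe_nnreal] using hM
  have hconv := hC u (fun y => h y ^ ((n + 1 : ℕ) : ℝ)⁻¹) N x _ hu (hh.pow_const _)
    (fun y => Real.rpow_nonneg (hh0 y) _) hN
    (by simpa only [Real.rpow_inv_natCast_pow (hh0 _) n.succ_ne_zero] using hH)
    (by positivity) hM' t t.2 (EuclideanSpace.single j 1)
  have he : ‖EuclideanSpace.single j (1 : ℝ)‖ₑ = 1 := by
    rw [← ofReal_norm, PiLp.norm_single, norm_one, ENNReal.ofReal_one]
  rwa [Real.rpow_inv_natCast_pow hb'.le n.succ_ne_zero, ENNReal.ofReal_coe_nnreal, he,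
    mul_one] at hconv

lemma exists_forall_convMax_le (hn : n ≠ 0) (hψ : ContDiff ℝ 1 ψ) (hψc : HasCompactSupport ψ) :
    ∃ C : ℝ≥0, ∀ (u h : EuclideanSpace ℝ (Fin n) → ℝ) (N : Set (EuclideanSpace ℝ (Fin n))),
      ContDiff ℝ 1 u → Measurable h → (∀ y, 0 ≤ h y) → volume N = 0 → HajlaszBoundOff N u h →
      ∀ j x, convMax n ψ u j x ≤
        C * maximalFunction volume (fun y => ‖h y‖ₑ ^ ((n : ℝ) / (n + 1))) x ^ (((n : ℝ) + 1) / n)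
        := by
  obtain ⟨C, hC⟩ := exists_forall_convMax_le_of_maximalFunction_le hn hψ hψc
  refine ⟨C + 1, fun u h N hu hh hh0 hN hH j x => ?_⟩
  refine ENNReal.le_mul_of_forall_lt (Or.inl (by simp)) (Or.inl ENNReal.coe_ne_top)
    fun C' hC' B hB => ?_
  induction B with
  | top =>
    rw [ENNReal.mul_top (pos_of_gt hC').ne']
    exact le_top
  | coe B =>
    refine (hC u h N x B hu hh hh0 hN hH (by exact_mod_cast pos_of_gt hB) ?_ j).trans ?_
    · rw [← inv_div ((n : ℝ) + 1)]
      exact (ENNReal.le_rpow_inv_iff (by positivity)).2 (by simpa only [inv_div] using hB.le)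
    · gcongr
      exact le_trans (by simp) hC'.le

lemma exists_forall_lintegral_convMax_rpow_le (hn : n ≠ 0) {q : ℝ} (hq : (n : ℝ) / (n + 1) < q)
    (hψ : ContDiff ℝ 1 ψ) (hψc : HasCompactSupport ψ) :
    ∃ C : ℝ≥0, ∀ (u h : EuclideanSpace ℝ (Fin n) → ℝ) (N : Set (EuclideanSpace ℝ (Fin n))),
      ContDiff ℝ 1 u → Measurable h → (∀ y, 0 ≤ h y) → volume N = 0 → HajlaszBoundOff N u h →
      ∀ j, ∫⁻ x, convMax n ψ u j x ^ q ≤ C * ∫⁻ x, ‖h x‖ₑ ^ q := by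
  have : Nonempty (Fin n) := ⟨⟨0, Nat.pos_of_ne_zero hn⟩⟩
  set s : ℝ := (n : ℝ) / (n + 1) with hs
  have hs0 : 0 < s := by positivity
  have hq0 : 0 < q := hs0.trans hq
  obtain ⟨C, hC⟩ := exists_forall_convMax_le hn hψ hψc
  obtain ⟨D, hD⟩ := exists_forall_lintegral_maximalFunction_rpow_le
    (volume : Measure (EuclideanSpace ℝ (Fin n))) ((one_lt_div hs0).2 hq)
  refine ⟨C ^ q * D, fun u h N hu hh hh0 hN hH j => ?_⟩
  set f : EuclideanSpace ℝ (Fin n) → ℝ≥0∞ := fun y => ‖h y‖ₑ ^ s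
  calc ∫⁻ x, convMax n ψ u j x ^ q
      ≤ ∫⁻ x, (C : ℝ≥0∞) ^ q * maximalFunction volume f x ^ (q / s) := by
        refine lintegral_mono fun x => ?_
        calc convMax n ψ u j x ^ q ≤ (C * maximalFunction volume f x ^ s⁻¹) ^ q := by
              gcongr
              simpa only [hs, inv_div] using hC u h N hu hh hh0 hN hH j x
          _ = _ := by
              rw [ENNReal.mul_rpow_of_nonneg _ _ hq0.le, ← ENNReal.rpow_mul, inv_mul_eq_div]
    _ = (C : ℝ≥0∞) ^ q * ∫⁻ x, maximalFunction volume f x ^ (q / s) :=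
        lintegral_const_mul' _ _ (by finiteness)
    _ ≤ (C : ℝ≥0∞) ^ q * (D * ∫⁻ x, f x ^ (q / s)) := by
        gcongr
        exact hD f (by fun_prop)
    _ = _ := by
        simp only [f, ← ENNReal.rpow_mul, mul_div_cancel₀ q hs0.ne']
        rw [ENNReal.coe_mul, ENNReal.coe_rpow_of_nonneg _ hq0.le, mul_assoc]

lemma exists_forall_hardyCap_le (hn : n ≠ 0) {q : ℝ} (hq : (n : ℝ) / (n + 1) < q)
    (hψ : ContDiff ℝ 1 ψ) (hψc : HasCompactSupport ψ) :
    ∃ C : ℝ≥0, ∀ (K U N : Set (EuclideanSpace ℝ (Fin n))) (φ h : EuclideanSpace ℝ (Fin n) → ℝ),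
      ContDiff ℝ (⊤ : ℕ∞) φ → HasCompactSupport φ → tsupport φ ⊆ U → (∀ x ∈ K, 1 ≤ φ x) →
      Measurable h → (∀ y, 0 ≤ h y) → volume N = 0 → HajlaszBoundOff N φ h →
      hardyCap n ψ q K U ≤ C * ∫⁻ x, ‖h x‖ₑ ^ q := by
  obtain ⟨C, hC⟩ := exists_forall_lintegral_convMax_rpow_le hn hq hψ hψc
  refine ⟨n * C, fun K U N φ h hφ hφc hφU hφK hh hh0 hN hH => ?_⟩
  calc hardyCap n ψ q K U ≤ ∑ j : Fin n, ∫⁻ x, convMax n ψ φ j x ^ q :=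
        sInf_le ⟨φ, hφ, hφc, hφU, hφK, rfl⟩
    _ ≤ ∑ _j : Fin n, C * ∫⁻ x, ‖h x‖ₑ ^ q :=
        Finset.sum_le_sum fun j _ => hC φ h N (hφ.of_le (by simp)) hh hh0 hN hH j
    _ = _ := by simp [mul_assoc]

end HardyMaximalFunction

section Capacity

lemma exists_forall_scaled_cutoff (E : Type*) [NormedAddCommGroup E] [NormedSpace ℝ E]
    [FiniteDimensional ℝ E] [HasContDiffBump E] :
    ∃ L : ℝ≥0, ∀ (x₀ : E) (r : ℝ), 0 < r → ∃ θ : E → ℝ, ContDiff ℝ (⊤ : ℕ∞) θ ∧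
      (∀ y ∈ ball x₀ r, θ y = 1) ∧ (∀ y ∉ closedBall x₀ (3 / 2 * r), θ y = 0) ∧
      (∀ y, |θ y| ≤ 1) ∧ LipschitzWith (L * r⁻¹.toNNReal) θ := by
  let η : ContDiffBump (0 : E) := ⟨1, 3 / 2, by norm_num, by norm_num⟩
  obtain ⟨L, hL⟩ := ContDiff.lipschitzWith_of_hasCompactSupport η.hasCompactSupport
    (η.contDiff (n := (⊤ : ℕ∞))) (by simp)
  refine ⟨L, fun x₀ r hr => ⟨fun y => η (r⁻¹ • (y - x₀)), η.contDiff.comp (by fun_prop),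
    fun y hy => ?_, fun y hy => ?_, fun y => ?_, ?_⟩⟩
  · refine η.one_of_mem_closedBall (mem_closedBall_zero_iff.2 ?_)
    rw [norm_smul, ← dist_eq_norm, norm_inv, Real.norm_of_nonneg hr.le, inv_mul_le_iff₀ hr]
    simpa only [η, mul_one] using (mem_ball.1 hy).le
  · refine η.zero_of_le_dist ?_
    rw [dist_zero_right, norm_smul, ← dist_eq_norm, norm_inv, Real.norm_of_nonneg hr.le,
      le_inv_mul_iff₀ hr, mul_comm]
    exact (not_le.1 hy).le
  · rw [abs_of_nonneg η.nonneg]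
    exact η.le_one
  · have hscale : LipschitzWith r⁻¹.toNNReal fun y => r⁻¹ • (y - x₀) := by
      refine LipschitzWith.of_dist_le_mul fun y z => ?_
      rw [dist_smul₀, dist_sub_right, Real.norm_of_nonneg (by positivity),
        Real.coe_toNNReal _ (by positivity)]
    exact hL.comp hscale

lemma exists_forall_exists_testFunction (E : Type*) [NormedAddCommGroup E] [NormedSpace ℝ E]
    [FiniteDimensional ℝ E] [HasContDiffBump E] :
    ∃ C : ℝ, 0 < C ∧ ∀ (u g : E → ℝ) (N : Set E) (x₀ x : E) (r b : ℝ), ContDiff ℝ (⊤ : ℕ∞) u →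
      (∀ y, 0 ≤ g y) → HajlaszBoundOff N u g → 0 < r → x ∈ closedBall x₀ r → u x ≠ 0 →
      0 ≤ b → (∃ᶠ z in 𝓝 x, z ∉ N ∧ g z ≤ b) →
      ∃ φ : E → ℝ, ContDiff ℝ (⊤ : ℕ∞) φ ∧ HasCompactSupport φ ∧
        tsupport φ ⊆ ball x₀ (2 * r) ∧ (∀ y ∈ ball x₀ r, u y = 0 → φ y = 1) ∧
        HajlaszBoundOff N φ ((ball x₀ (2 * r)).indicator fun y => C / |u x| * (g y + b)) := by
  obtain ⟨L, hL⟩ := exists_forall_scaled_cutoff E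
  refine ⟨1 + 3 * L, by positivity, fun u g N x₀ x r b hu hg hH hr hx hux hb hfreq => ?_⟩
  obtain ⟨θ, hθ, hθ1, hθ0, hθle, hθL⟩ := hL x₀ r hr
  have hsub : closedBall x₀ (3 / 2 * r) ⊆ ball x₀ (2 * r) := closedBall_subset_ball (by linarith)
  have hosc : ∀ y ∈ ball x₀ (2 * r), y ∉ N → |u y - u x| ≤ 3 * r * (g y + b) := by
    intro y hy hyN
    refine (hH.abs_sub_le_of_frequently hu.continuous.continuousAt hfreq hyN).trans ?_
    have := hg y
    gcongr
    linarith [dist_triangle_right y x x₀, mem_ball.1 hy, mem_closedBall.1 hx]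
  have hsupp : Function.support (fun y => -(u x)⁻¹ * (θ y * (u y - u x))) ⊆
      closedBall x₀ (3 / 2 * r) := by
    refine Function.support_subset_iff'.2 fun y hy => ?_
    rw [hθ0 y hy, zero_mul, mul_zero]
  refine ⟨fun y => -(u x)⁻¹ * (θ y * (u y - u x)),
    contDiff_const.mul (hθ.mul (hu.sub contDiff_const)),
    .of_support_subset_isCompact (isCompact_closedBall _ _) hsupp,
    (closure_minimal hsupp isClosed_closedBall).trans hsub, fun y hy huy => ?_, ?_⟩
  · simp [hθ1 y hy, huy, hux]
  · have hgrad := (hH.cutoff_mul_sub_const hg (by positivity) hb hθL hθle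
      (fun y hy => hθ0 y (notMem_subset hsub hy)) hosc).const_mul (-(u x)⁻¹)
    have hconst : 1 + ((L * r⁻¹.toNNReal : ℝ≥0) : ℝ) * (3 * r) = 1 + 3 * L := by
      rw [NNReal.coe_mul, Real.coe_toNNReal _ (by positivity)]
      field_simp
    convert hgrad using 2 with y
    rw [hconst, abs_neg, abs_inv, ← indicator_const_mul]
    congr! 2
    ring

lemma lintegral_enorm_indicator_mul_add_rpow_le {X : Type*} [PseudoMetricSpace X] [ProperSpace X]
    [MeasurableSpace X] {μ : Measure X} [IsFiniteMeasureOnCompacts μ] [μ.IsOpenPosMeasure]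
    {g : X → ℝ} {q b : ℝ} (hq : 0 < q) {x : X} {S : Set X} {ρ : ℝ} (hρ : 0 < ρ)
    (hS : S ⊆ ball x ρ) (k : ℝ)
    (hM : maximalFunction μ (fun y => ‖g y‖ₑ ^ q) x ≤ ‖b‖ₑ ^ q) :
    ∫⁻ y, ‖S.indicator (fun y => k * (g y + b)) y‖ₑ ^ q ∂μ ≤
      2 * (2 * ‖k‖ₑ * ‖b‖ₑ) ^ q * μ (ball x ρ) := by
  have hpt : ∀ y, ‖S.indicator (fun y => k * (g y + b)) y‖ₑ ^ q ≤
      (ball x ρ).indicator (fun y => (2 * ‖k‖ₑ) ^ q * (‖g y‖ₑ ^ q + ‖b‖ₑ ^ q)) y := by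
    intro y
    by_cases hy : y ∈ S
    · rw [indicator_of_mem hy, indicator_of_mem (hS hy), enorm_mul,
        ENNReal.mul_rpow_of_nonneg _ _ hq.le, ENNReal.mul_rpow_of_nonneg _ _ hq.le,
        mul_comm (2 ^ q), mul_assoc]
      gcongr
      exact (ENNReal.rpow_le_rpow (enorm_add_le _ _) hq.le).trans
        (ENNReal.add_rpow_le_two_rpow_mul_rpow_add_rpow _ _ hq.le)
    · rw [indicator_of_notMem hy, enorm_zero, ENNReal.zero_rpow_of_pos hq]
      exact zero_le
  calc _ ≤ ∫⁻ y, (ball x ρ).indicator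
            (fun y => (2 * ‖k‖ₑ) ^ q * (‖g y‖ₑ ^ q + ‖b‖ₑ ^ q)) y ∂μ := lintegral_mono hpt
    _ ≤ ∫⁻ y in ball x ρ, (2 * ‖k‖ₑ) ^ q * (‖g y‖ₑ ^ q + ‖b‖ₑ ^ q) ∂μ := lintegral_indicator_le _ _
    _ = (2 * ‖k‖ₑ) ^ q *
          (∫⁻ y in ball x ρ, ‖g y‖ₑ ^ q ∂μ + ‖b‖ₑ ^ q * μ (ball x ρ)) := by
        rw [lintegral_const_mul' _ _ (by finiteness), lintegral_add_right _ measurable_const,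
          setLIntegral_const]
    _ ≤ (2 * ‖k‖ₑ) ^ q * (‖b‖ₑ ^ q * μ (ball x ρ) + ‖b‖ₑ ^ q * μ (ball x ρ)) := by
        gcongr (2 * ‖k‖ₑ) ^ q * (?_ + _)
        exact setLIntegral_ball_le_of_maximalFunction_le hM hρ
    _ = _ := by
        rw [ENNReal.mul_rpow_of_nonneg _ ‖b‖ₑ hq.le]
        ring

lemma lintegral_enorm_indicator_ball_mul_add_rpow_le {E : Type*} [NormedAddCommGroup E]
    [NormedSpace ℝ E] [FiniteDimensional ℝ E] [MeasurableSpace E] [BorelSpace E] {μ : Measure E}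
    [μ.IsAddHaarMeasure] {g : E → ℝ} {q r k a b : ℝ} (hq : 0 < q) (hr : 0 < r) {x₀ x : E}
    (hx : x ∈ closedBall x₀ r) (hk : 0 ≤ k) (ha : 0 ≤ a) (hb : 0 ≤ b)
    (hM : maximalFunction μ (fun y => ‖g y‖ₑ ^ q) x ≤ ‖b‖ₑ ^ q) :
    ∫⁻ y, ‖(ball x₀ (2 * r)).indicator (fun y => k / a * (g y + b)) y‖ₑ ^ q ∂μ ≤
      ENNReal.ofReal (2 * (2 * k * (b / a)) ^ q * ((3 * r) ^ finrank ℝ E * μ.real (ball 0 1))) := by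
  have : ProperSpace E := FiniteDimensional.proper_real E
  have hsub : ball x₀ (2 * r) ⊆ ball x (3 * r) :=
    ball_subset_ball' (by linarith [mem_closedBall'.1 hx])
  have hvol : μ (ball x (3 * r)) =
      ENNReal.ofReal ((3 * r) ^ finrank ℝ E * μ.real (ball 0 1)) := by
    rw [Measure.addHaar_ball_of_pos _ x (by positivity), ENNReal.ofReal_mul (by positivity),
      ofReal_measureReal]
  have hslope : 2 * ‖k / a‖ₑ * ‖b‖ₑ = ENNReal.ofReal (2 * k * (b / a)) := by
    rw [Real.enorm_of_nonneg (by positivity), Real.enorm_of_nonneg hb, ← ENNReal.ofReal_ofNat 2,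
      ← ENNReal.ofReal_mul (by positivity), ← ENNReal.ofReal_mul (by positivity)]
    congr 1
    ring
  refine (lintegral_enorm_indicator_mul_add_rpow_le hq (by positivity) hsub _ hM).trans_eq ?_
  rw [hslope, hvol, ENNReal.ofReal_rpow_of_nonneg (by positivity) hq.le, ← ENNReal.ofReal_ofNat 2,
    ← ENNReal.ofReal_mul (by positivity), ← ENNReal.ofReal_mul (by positivity)]

variable {n : ℕ} {ψ : EuclideanSpace ℝ (Fin n) → ℝ} {q : ℝ}

lemma exists_forall_hardyCap_ball_le (hn : n ≠ 0) (hq : (n : ℝ) / (n + 1) < q)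
    (hψ : ContDiff ℝ 1 ψ) (hψc : HasCompactSupport ψ) :
    ∃ A : ℝ, 0 ≤ A ∧ ∀ (x₀ : EuclideanSpace ℝ (Fin n)) (r : ℝ), 0 < r →
      ∀ K ⊆ ball x₀ r, ∀ (u g : EuclideanSpace ℝ (Fin n) → ℝ) (N : Set (EuclideanSpace ℝ (Fin n))),
      ContDiff ℝ (⊤ : ℕ∞) u → (∀ y ∈ K, u y = 0) → Measurable g → (∀ y, 0 ≤ g y) →
      volume N = 0 → HajlaszBoundOff N u g → ∀ x ∈ closedBall x₀ r, u x ≠ 0 →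
      ∀ b : ℝ, 0 ≤ b → maximalFunction volume (fun y => ‖g y‖ₑ ^ q) x ≤ ‖b‖ₑ ^ q →
      hardyCap n ψ q K (ball x₀ (2 * r)) ≤ ENNReal.ofReal (A * (b / |u x|) ^ q * r ^ n) := by
  have : Nonempty (Fin n) := ⟨⟨0, Nat.pos_of_ne_zero hn⟩⟩
  have hq0 : 0 < q := lt_of_le_of_lt (by positivity) hq
  obtain ⟨D, hD⟩ := exists_forall_hardyCap_le hn hq hψ hψc
  obtain ⟨k, hk, htest⟩ := exists_forall_exists_testFunction (EuclideanSpace ℝ (Fin n))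
  set V : ℝ := volume.real (ball (0 : EuclideanSpace ℝ (Fin n)) 1)
  refine ⟨D * (2 * (2 * k) ^ q * (3 ^ n * V)), by positivity, ?_⟩
  intro x₀ r hr K hK u g N hu huK hg hg0 hN hH x hx hux b hb hM
  have hfreq : ∃ᶠ z in 𝓝 x, z ∉ N ∧ g z ≤ b := by
    refine (frequently_notMem_null_le_of_maximalFunction_le (by fun_prop) hN hM).mono
      fun z hz => ⟨hz.1, ?_⟩
    have hzb := (ENNReal.rpow_le_rpow_iff hq0).1 hz.2
    rwa [Real.enorm_of_nonneg (hg0 z), Real.enorm_of_nonneg hb, ENNReal.ofReal_le_ofReal_iff hb]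
      at hzb
  obtain ⟨φ, hφ, hφc, hφB, hφK, hφH⟩ := htest u g N x₀ x r b hu hg0 hH hr hx hux hb hfreq
  calc hardyCap n ψ q K (ball x₀ (2 * r))
      ≤ D * ∫⁻ y, ‖(ball x₀ (2 * r)).indicator (fun y => k / |u x| * (g y + b)) y‖ₑ ^ q :=
        hD K _ N φ _ hφ hφc hφB (fun y hy => (hφK y (hK hy) (huK y hy)).ge)
          (((hg.add_const b).const_mul _).indicator measurableSet_ball)
          (indicator_nonneg fun y _ => mul_nonneg (by positivity) (add_nonneg (hg0 y) hb)) hN hφH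
    _ ≤ D * ENNReal.ofReal (2 * (2 * k * (b / |u x|)) ^ q * ((3 * r) ^ n * V)) := by
        gcongr
        simpa only [finrank_euclideanSpace_fin] using
          lintegral_enorm_indicator_ball_mul_add_rpow_le hq0 hr hx hk.le (abs_nonneg (u x)) hb hM
    _ = _ := by
        rw [← ENNReal.ofReal_coe_nnreal, ← ENNReal.ofReal_mul (by positivity),
          Real.mul_rpow (by positivity) (by positivity)]
        congr 1
        ring

lemma le_mul_of_mul_rpow_sub_le {c A r a b : ℝ} {d : ℕ} (hq : 0 < q) (hc : 0 < c) (hA : 0 ≤ A)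
    (hr : 0 < r) (ha : 0 < a) (hb : 0 ≤ b)
    (h : c * r ^ ((d : ℝ) - q) ≤ A * (b / a) ^ q * r ^ d) : a ≤ (A / c) ^ q⁻¹ * r * b := by
  have haq : a ^ q ≤ A / c * (r * b) ^ q := by
    rw [Real.rpow_sub hr, Real.rpow_natCast, Real.div_rpow hb ha.le] at h
    rw [Real.mul_rpow hr.le hb, div_mul_eq_mul_div, le_div_iff₀ hc]
    field_simp at h
    linarith
  calc a ≤ (A / c * (r * b) ^ q) ^ q⁻¹ :=
        (Real.le_rpow_inv_iff_of_pos ha.le (by positivity) hq).2 haq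
    _ = (A / c) ^ q⁻¹ * r * b := by
        rw [Real.mul_rpow (by positivity) (by positivity),
          Real.rpow_rpow_inv (by positivity) hq.ne', mul_assoc]

lemma exists_forall_abs_le_of_hardyCap_ge (hn : n ≠ 0) (hq : (n : ℝ) / (n + 1) < q) {c : ℝ}
    (hc : 0 < c) (hψ : ContDiff ℝ 1 ψ) (hψc : HasCompactSupport ψ) :
    ∃ C : ℝ, 0 < C ∧ ∀ (x₀ : EuclideanSpace ℝ (Fin n)) (r : ℝ), 0 < r → ∀ K ⊆ ball x₀ r,
      ENNReal.ofReal (c * r ^ ((n : ℝ) - q)) ≤ hardyCap n ψ q K (ball x₀ (2 * r)) →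
      ∀ (u g : EuclideanSpace ℝ (Fin n) → ℝ) (N : Set (EuclideanSpace ℝ (Fin n))),
      ContDiff ℝ (⊤ : ℕ∞) u → (∀ y ∈ K, u y = 0) → Measurable g → (∀ y, 0 ≤ g y) →
      volume N = 0 → HajlaszBoundOff N u g → ∀ x ∈ closedBall x₀ r, ∀ b : ℝ, 0 ≤ b →
      maximalFunction volume (fun y => ‖g y‖ₑ ^ q) x ≤ ‖b‖ₑ ^ q → |u x| ≤ C * r * b := by
  have hq0 : 0 < q := lt_of_le_of_lt (by positivity) hq
  obtain ⟨A, hA, hcapA⟩ := exists_forall_hardyCap_ball_le hn hq hψ hψc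
  refine ⟨(A / c) ^ q⁻¹ + 1, by positivity, ?_⟩
  intro x₀ r hr K hK hcap u g N hu huK hg hg0 hN hH x hx b hb hM
  rcases eq_or_ne (u x) 0 with hux | hux
  · rw [hux, abs_zero]
    positivity
  have hle := hcap.trans (hcapA x₀ r hr K hK u g N hu huK hg hg0 hN hH x hx hux b hb hM)
  rw [ENNReal.ofReal_le_ofReal_iff (by positivity)] at hle
  calc |u x| ≤ (A / c) ^ q⁻¹ * r * b :=
        le_mul_of_mul_rpow_sub_le hq0 hc hA hr (abs_pos.2 hux) hb hle
    _ ≤ ((A / c) ^ q⁻¹ + 1) * r * b := by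
        gcongr
        exact le_add_of_nonneg_right zero_le_one

end Capacity

theorem capacity_maximal_estimate_general {n : ℕ} (hn : n ≠ 0) {q : ℝ}
    (hq : (n : ℝ) / (n + 1) < q) {c : ℝ} (hc : 0 < c) {ψ : EuclideanSpace ℝ (Fin n) → ℝ}
    (hψ : ContDiff ℝ 1 ψ) (hψc : HasCompactSupport ψ) :
    ∃ C : ℝ, 0 < C ∧ ∀ (x₀ : EuclideanSpace ℝ (Fin n)) (r : ℝ), 0 < r → ∀ K ⊆ ball x₀ r,
      ENNReal.ofReal (c * r ^ ((n : ℝ) - q)) ≤ hardyCap n ψ q K (ball x₀ (2 * r)) →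
      ∀ u : EuclideanSpace ℝ (Fin n) → ℝ, ContDiff ℝ (⊤ : ℕ∞) u → (∀ x ∈ K, u x = 0) →
      ∀ g : EuclideanSpace ℝ (Fin n) → ℝ, IsHajlaszGradientOn n u g univ →
      ∀ x ∈ closedBall x₀ r, ENNReal.ofReal |u x| ≤
        ENNReal.ofReal (C * r) * hlMax n (fun y => g y ^ q) x ^ (1 / q) := by
  have hq0 : 0 < q := lt_of_le_of_lt (by positivity) hq
  obtain ⟨C, hC, hmain⟩ := exists_forall_abs_le_of_hardyCap_ge hn hq hc hψ hψc
  refine ⟨C, hC, ?_⟩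
  rintro x₀ r hr K hK hcap u hu huK g ⟨hg, hg0, N, hN, hgN⟩ x hx
  have hH : HajlaszBoundOff N u g := fun y hy z hz => by
    rw [dist_eq_norm]
    exact hgN y ⟨mem_univ y, hy⟩ z ⟨mem_univ z, hz⟩
  have hmax : hlMax n (fun y => g y ^ q) = maximalFunction volume fun y => ‖g y‖ₑ ^ q := by
    simp only [hlMax_eq_maximalFunction, Real.enorm_rpow_of_nonneg (hg0 _) hq0.le]
  set M := hlMax n (fun y => g y ^ q) x
  rcases eq_or_ne M ∞ with hM | hM
  · rw [hM, ENNReal.top_rpow_of_pos (by positivity),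
      ENNReal.mul_top (ENNReal.ofReal_pos.2 (by positivity)).ne']
    exact le_top
  have hroot : ‖(M ^ (1 / q)).toReal‖ₑ = M ^ (1 / q) := by
    rw [Real.enorm_of_nonneg toReal_nonneg, ENNReal.ofReal_toReal (by finiteness)]
  have hle := hmain x₀ r hr K hK hcap u g N hu huK hg hg0 hN hH x hx _ toReal_nonneg
    (by rw [hroot, one_div, ENNReal.rpow_inv_rpow hq0.ne', ← hmax])
  calc ENNReal.ofReal |u x| ≤ ENNReal.ofReal (C * r * (M ^ (1 / q)).toReal) :=
        ENNReal.ofReal_le_ofReal hle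
    _ = ENNReal.ofReal (C * r) * M ^ (1 / q) := by
        rw [ENNReal.ofReal_mul (by positivity), ENNReal.ofReal_toReal (by finiteness)]

/-- **Lemma 4.3.** If `K ⊆ B` is compact with `cap_q(K;2B) ≥ c r^{n-q}` and `u` is a
smooth compactly supported function vanishing on `K`, then any Hajlasz gradient `g` of
`u` satisfies `|u(x)| ≤ C r (M(g^q)(x))^{1/q}` on the closed ball `cl(B)`. -/
theorem capacity_maximal_estimate
    (n : ℕ) (hn : 1 ≤ n) (q : ℝ) (hq1 : (n : ℝ) / (n + 1) < q) (hq2 : q ≤ 1)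
    (c : ℝ) (hc : 0 < c)
    (ψ : EuclideanSpace ℝ (Fin n) → ℝ) (hψ : ContDiff ℝ (⊤ : ℕ∞) ψ)
    (hψsupp : tsupport ψ ⊆ ball 0 1) (hψint : ∫ x, ψ x = 1) :
    ∃ C : ℝ, 0 < C ∧
      ∀ (x₀ : EuclideanSpace ℝ (Fin n)) (r : ℝ), 0 < r →
        ∀ K : Set (EuclideanSpace ℝ (Fin n)), IsCompact K → K ⊆ ball x₀ r →
          ENNReal.ofReal (c * r ^ ((n : ℝ) - q)) ≤
            hardyCap n ψ q K (ball x₀ (2 * r)) →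
          ∀ u : EuclideanSpace ℝ (Fin n) → ℝ,
            ContDiff ℝ (⊤ : ℕ∞) u → HasCompactSupport u → (∀ x ∈ K, u x = 0) →
            ∀ g : EuclideanSpace ℝ (Fin n) → ℝ, IsHajlaszGradientOn n u g univ →
              ∀ x ∈ closedBall x₀ r,
                ENNReal.ofReal |u x| ≤
                  ENNReal.ofReal (C * r) *
                    (hlMax n (fun y => g y ^ q) x) ^ (1 / q) := by
  obtain ⟨C, hC, hmain⟩ := capacity_maximal_estimate_general (by lia) hq1 hc (hψ.of_le (by simp))
    (.of_support_subset_isCompact (isCompact_closedBall 0 1)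
      ((subset_tsupport ψ).trans (hψsupp.trans ball_subset_closedBall)))
  exact ⟨C, hC, fun x₀ r hr K _ hK hcap u hu _ => hmain x₀ r hr K hK hcap u hu⟩
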